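/- There exists a constant C > 0 such that for every L > 2, the function f_L = χ_{R_L} − χ_{R₀} belongs to H¹ and satisfies ‖f_L‖_{H¹} ≤ C log L. -/

import Mathlib

open MeasureTheory Real Filter Set
open scoped ENNReal

noncomputable section

/-- The group `G = ℝ² ⋊ ℝ⁺`, realized as triples `(x₁, x₂, a)` (only `a > 0` is relevant). -/
abbrev G : Type := ℝ × ℝ × ℝ

/-- Group product `(x₁,x₂,a)·(x₁',x₂',a') = (x₁+a x₁', x₂+a x₂', a a')`. -/
def gMul (x y : G) : G := (x.1 + x.2.2 * y.1, x.2.1 + x.2.2 * y.2.1, x.2.2 * y.2.2)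

/-- Group inverse `(x₁,x₂,a)⁻¹ = (−x₁/a, −x₂/a, 1/a)`. -/
def gInv (x : G) : G := (-x.1 / x.2.2, -x.2.1 / x.2.2, 1 / x.2.2)

/-- The identity `e = (0,0,1)`. -/
def gE : G := (0, 0, 1)

/-- The right Haar measure `dρ = a⁻¹ dx₁ dx₂ da` (supported where `a > 0`). -/
def ρG : Measure G :=
  (volume : Measure G).withDensity fun x => ENNReal.ofReal (if 0 < x.2.2 then x.2.2⁻¹ else 0)

/-- The modular function `δ(x₁,x₂,a) = a⁻²`. -/
def deltaG (x : G) : ℝ := (x.2.2 ^ 2)⁻¹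

/-- `|x| = √(x₁² + x₂²)`. -/
def normG (x : G) : ℝ := Real.sqrt (x.1 ^ 2 + x.2.1 ^ 2)

/-- `cosh r(x) = (a + a⁻¹ + a⁻¹|x|²)/2`. -/
def coshArg (x : G) : ℝ := (x.2.2 + x.2.2⁻¹ + x.2.2⁻¹ * (x.1 ^ 2 + x.2.1 ^ 2)) / 2

/-- `r(x) ≥ 0` is determined by `cosh r(x) = coshArg x`; explicitly `r = arcosh (coshArg x)`. -/
def rG (x : G) : ℝ := Real.log (coshArg x + Real.sqrt (coshArg x ^ 2 - 1))

/-- The left-invariant distance `d(x,y) = r(x⁻¹y)`. -/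
def dG (x y : G) : ℝ := rG (gMul (gInv x) y)

/-- The heat kernel
`p_t(x) = (8π^{3/2})⁻¹ δ(x)^{1/2} (r(x)/sinh r(x)) t^{−3/2} exp(−r(x)²/(4t))`,
with `r/sinh r := 1` at `x = e`. -/
def heatK (t : ℝ) (x : G) : ℝ :=
  (8 * Real.pi ^ ((3 : ℝ)/2))⁻¹ * Real.sqrt (deltaG x) *
    (if rG x = 0 then 1 else rG x / Real.sinh (rG x)) *
    t ^ (-(3 : ℝ)/2) * Real.exp (-(rG x ^ 2) / (4 * t))

/-- Convolution `f ∗ p_t(x) = ∫ f(xy⁻¹) p_t(y) dρ(y)`. -/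
def convHeat (f : G → ℝ) (t : ℝ) (x : G) : ℝ := ∫ y, f (gMul x (gInv y)) * heatK t y ∂ρG

/-- The heat maximal operator `Mf(x) = sup_{t>0} |f ∗ p_t(x)|` (valued in `ℝ≥0∞`). -/
def maxHeat (f : G → ℝ) (x : G) : ℝ≥0∞ :=
  ⨆ (t : ℝ) (_ : 0 < t), ENNReal.ofReal |convHeat f t x|

/-- Calderón–Zygmund sets. -/
def IsCZ (R : Set G) : Prop :=
  ∃ c : G, ∃ L r : ℝ, 0 < c.2.2 ∧ 0 < L ∧ 0 < r ∧
    R = Set.Icc (c.1 - L/2) (c.1 + L/2) ×ˢ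
        (Set.Icc (c.2.1 - L/2) (c.2.1 + L/2) ×ˢ
         Set.Icc (c.2.2 * Real.exp (-r)) (c.2.2 * Real.exp r)) ∧
    (r < 1 → Real.exp 2 * c.2.2 * r ≤ L ∧ L < Real.exp 8 * c.2.2 * r) ∧
    (1 ≤ r → c.2.2 * Real.exp (2*r) ≤ L ∧ L < c.2.2 * Real.exp (8*r))

/-- Atoms: `A ∈ L¹(ρ)` supported in a Calderón–Zygmund set `R`, with
`‖A‖_∞ ≤ ρ(R)⁻¹` and `∫ A dρ = 0`. -/
def IsAtomG (A : G → ℝ) : Prop :=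
  Integrable A ρG ∧
  ∃ R : Set G, IsCZ R ∧ (∀ x ∉ R, A x = 0) ∧
    eLpNorm A ⊤ ρG ≤ (ρG R)⁻¹ ∧
    ∫ x, A x ∂ρG = 0

/-- `f = Σ_j lam_j A_j` with atoms `A_j`, `Σ_j |lam_j| < ∞`, converging in `L¹(ρ)`. -/
def IsH1Decomp (f : G → ℝ) (lam : ℕ → ℝ) (A : ℕ → G → ℝ) : Prop :=
  (∀ j, IsAtomG (A j)) ∧ Summable (fun j => |lam j|) ∧
  Tendsto (fun N => eLpNorm (fun x => f x - ∑ j ∈ Finset.range N, lam j * A j x) 1 ρG)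
    atTop (nhds 0)

/-- The Hardy space `H¹`. -/
def MemH1 (f : G → ℝ) : Prop :=
  Integrable f ρG ∧ ∃ lam A, IsH1Decomp f lam A

/-- `‖f‖_{H¹} = inf Σ_j |lam_j|` over all atomic decompositions. -/
def H1norm (f : G → ℝ) : ℝ :=
  sInf {s | ∃ lam A, IsH1Decomp f lam A ∧ s = ∑' j, |lam j|}

/-- The left-invariant vector field `X₀ = a ∂_a`. -/
def X0 (f : G → ℝ) (x : G) : ℝ := x.2.2 * deriv (fun s => f (x.1, x.2.1, s)) x.2.2

/-- The left-invariant vector field `X₁ = a ∂_{x₁}`. -/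
def X1 (f : G → ℝ) (x : G) : ℝ := x.2.2 * deriv (fun s => f (s, x.2.1, x.2.2)) x.1

/-- The left-invariant vector field `X₂ = a ∂_{x₂}`. -/
def X2 (f : G → ℝ) (x : G) : ℝ := x.2.2 * deriv (fun s => f (x.1, s, x.2.2)) x.2.1

/-- `‖∇p_t(x)‖`, the Euclidean norm of `(X₀p_t, X₁p_t, X₂p_t)` at `x`. -/
def gradHeatNorm (t : ℝ) (x : G) : ℝ :=
  Real.sqrt (X0 (heatK t) x ^ 2 + X1 (heatK t) x ^ 2 + X2 (heatK t) x ^ 2)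

/-- The Poisson kernel `q_t(x) = π⁻² δ(x)^{1/2} (r(x)/sinh r(x)) · t/(t²+r(x)²)²`. -/
def poissonK (t : ℝ) (x : G) : ℝ :=
  (Real.pi ^ 2)⁻¹ * Real.sqrt (deltaG x) *
    (if rG x = 0 then 1 else rG x / Real.sinh (rG x)) *
    (t / (t ^ 2 + rG x ^ 2) ^ 2)

/-- Convolution `f ∗ q_t(x) = ∫ f(xy⁻¹) q_t(y) dρ(y)`. -/
def convPoisson (f : G → ℝ) (t : ℝ) (x : G) : ℝ := ∫ y, f (gMul x (gInv y)) * poissonK t y ∂ρG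

/-- The Poisson maximal operator `M̃f(x) = sup_{t>0} |f ∗ q_t(x)|`. -/
def maxPoisson (f : G → ℝ) (x : G) : ℝ≥0∞ :=
  ⨆ (t : ℝ) (_ : 0 < t), ENNReal.ofReal |convPoisson f t x|

/-- `G_{r₁}(x) = sup_{z ∈ B(x,r₁/2)} sup_{t>0} ‖∇p_t(z)‖`. -/
def Gsup (r1 : ℝ) (x : G) : ℝ≥0∞ :=
  ⨆ (z : G) (_ : 0 < z.2.2 ∧ dG x z < r1 / 2) (t : ℝ) (_ : 0 < t),
    ENNReal.ofReal (gradHeatNorm t z)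

/-- `R₀ = [−1,1]×[−1,1]×[e⁻¹,e]`. -/
def R0set : Set G :=
  Set.Icc (-1 : ℝ) 1 ×ˢ (Set.Icc (-1 : ℝ) 1 ×ˢ Set.Icc (Real.exp (-1)) (Real.exp 1))

/-- `R_L = [L−1,L+1]×[−1,1]×[e⁻¹,e]`. -/
def RLset (L : ℝ) : Set G :=
  Set.Icc (L - 1) (L + 1) ×ˢ (Set.Icc (-1 : ℝ) 1 ×ˢ Set.Icc (Real.exp (-1)) (Real.exp 1))

/-- `f_L = χ_{R_L} − χ_{R₀}`. -/
def fL (L : ℝ) : G → ℝ := fun x =>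
  (RLset L).indicator (fun _ => (1 : ℝ)) x - R0set.indicator (fun _ => (1 : ℝ)) x

/-- The mean of `g` over `R` with respect to `ρ`. -/
def czMean (g : G → ℝ) (R : Set G) : ℝ := (∫ x in R, g x ∂ρG) / (ρG R).toReal

/-- `‖g‖_{BMO} = sup_R ρ(R)⁻¹ ∫_R |g − g_R| dρ` over Calderón–Zygmund sets `R`. -/
def czBMO (g : G → ℝ) : ℝ≥0∞ :=
  ⨆ (R : Set G) (_ : IsCZ R),
    (ρG R)⁻¹ * ∫⁻ x in R, ENNReal.ofReal |g x - czMean g R| ∂ρG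

/-- `‖h‖_{BMO(ℝ)} = sup_Q |Q|⁻¹ ∫_Q |h − h_Q|` over bounded intervals `Q ⊂ ℝ`. -/
def lineBMO (h : ℝ → ℝ) : ℝ≥0∞ :=
  ⨆ (a : ℝ) (b : ℝ) (_ : a < b),
    (ENNReal.ofReal (b - a))⁻¹ *
      ∫⁻ s in Set.Icc a b, ENNReal.ofReal |h s - (∫ u in Set.Icc a b, h u) / (b - a)|

/-- `2R₀ = [−2,2]×[−2,2]×[e⁻²,e²]`. -/
def twoR0set : Set G :=
  Set.Icc (-2 : ℝ) 2 ×ˢ (Set.Icc (-2 : ℝ) 2 ×ˢ Set.Icc (Real.exp (-2)) (Real.exp 2))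

/-- The set `{x₁ > 3, |x₂| < 1, e⁻¹ < a < e}`. -/
def domSpecial : Set G :=
  {x : G | 3 < x.1 ∧ |x.2.1| < 1 ∧ Real.exp (-1) < x.2.2 ∧ x.2.2 < Real.exp 1}

/-- The function equal to `1/(x₁ (log x₁)^{3/2})` on `{x₁ > 3, |x₂| < 1, e⁻¹ < a < e}`,
to `c₀` on `R₀`, and `0` elsewhere. -/
def fSpecial (c0 : ℝ) : G → ℝ := fun x =>
  domSpecial.indicator (fun y => (y.1 * Real.log y.1 ^ ((3 : ℝ)/2))⁻¹) x
    + R0set.indicator (fun _ => c0) x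

/-! ### Proof -/

def czS (c : ℝ) (k : ℕ) : Set G :=
  Set.Icc (c - Real.exp (4 * k)) (c + Real.exp (4 * k)) ×ˢ
    (Set.Icc (-Real.exp (4 * k)) (Real.exp (4 * k)) ×ˢ
      Set.Icc (Real.exp (-((k : ℝ) + 1))) (Real.exp ((k : ℝ) + 1)))

def czm (k : ℕ) : ℝ := (2 * Real.exp (4 * k)) ^ 2 * (2 * ((k : ℝ) + 1))

lemma czm_pos (k : ℕ) : 0 < czm k := by unfold czm; positivity

lemma czm_succ (k : ℕ) : czm (k + 1) ≤ 2 * Real.exp 8 * czm k := by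
  have h : Real.exp (4 * ((k + 1 : ℕ) : ℝ)) ^ 2 = Real.exp 8 * Real.exp (4 * k) ^ 2 := by
    rw [← Real.exp_nat_mul, ← Real.exp_nat_mul, ← Real.exp_add]
    congr 1; push_cast; ring
  unfold czm
  rw [mul_pow, mul_pow, h]
  push_cast
  have : 0 < Real.exp 8 * Real.exp (4 * k) ^ 2 := by positivity
  have hk : (0 : ℝ) ≤ k := by positivity
  nlinarith [mul_nonneg this.le hk]

def wG (a : ℝ) : ℝ≥0∞ := ENNReal.ofReal (if 0 < a then a⁻¹ else 0)

lemma wG_meas : Measurable wG := by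
  unfold wG
  exact (Measurable.ite measurableSet_Ioi measurable_inv measurable_const).ennreal_ofReal

lemma rho_eq : ρG = (volume : Measure ℝ).prod
    ((volume : Measure ℝ).prod ((volume : Measure ℝ).withDensity wG)) := by
  have : SFinite ((volume : Measure ℝ).withDensity wG) := inferInstance
  rw [prod_withDensity_right wG_meas,
    prod_withDensity_right (g := fun z : ℝ × ℝ => wG z.2) (wG_meas.comp measurable_snd)]
  rfl

lemma w_Icc (r : ℝ) (hr : 0 < r) :
    (volume : Measure ℝ).withDensity wG (Set.Icc (Real.exp (-r)) (Real.exp r))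
      = ENNReal.ofReal (2 * r) := by
  have hle : Real.exp (-r) ≤ Real.exp r := Real.exp_le_exp.2 (by linarith)
  have hint : IntegrableOn (fun a : ℝ => a⁻¹) (Set.Icc (Real.exp (-r)) (Real.exp r)) volume := by
    apply ContinuousOn.integrableOn_compact isCompact_Icc
    apply continuousOn_inv₀.mono
    intro x hx
    exact ((Real.exp_pos _).trans_le hx.1).ne'
  rw [withDensity_apply _ measurableSet_Icc]
  have h1 : ∫⁻ a in Set.Icc (Real.exp (-r)) (Real.exp r), wG a
      = ∫⁻ a in Set.Icc (Real.exp (-r)) (Real.exp r), ENNReal.ofReal a⁻¹ := by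
    apply setLIntegral_congr_fun measurableSet_Icc
    intro a ha
    simp [wG, (Real.exp_pos _).trans_le ha.1]
  rw [h1, ← ofReal_integral_eq_lintegral_ofReal hint]
  · congr 1
    rw [integral_Icc_eq_integral_Ioc, ← intervalIntegral.integral_of_le hle,
      integral_inv_of_pos (Real.exp_pos _) (Real.exp_pos _),
      Real.log_div (Real.exp_pos _).ne' (Real.exp_pos _).ne', Real.log_exp, Real.log_exp]
    ring
  · filter_upwards [ae_restrict_mem measurableSet_Icc] with a ha
    exact inv_nonneg.2 ((Real.exp_pos _).trans_le ha.1).le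

lemma rho_czS (c : ℝ) (k : ℕ) : ρG (czS c k) = ENNReal.ofReal (czm k) := by
  rw [rho_eq, czS, Measure.prod_prod, Measure.prod_prod, w_Icc _ (by positivity),
    Real.volume_Icc, Real.volume_Icc, ← ENNReal.ofReal_mul, ← ENNReal.ofReal_mul]
  · congr 1; unfold czm; ring
  · have := Real.exp_pos (4 * (k : ℝ)); linarith
  · have := Real.exp_pos (4 * (k : ℝ)); linarith

lemma czS_meas (c : ℝ) (k : ℕ) : MeasurableSet (czS c k) :=
  measurableSet_Icc.prod (measurableSet_Icc.prod measurableSet_Icc)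

lemma czS_isCZ (c : ℝ) (k : ℕ) (hk : 1 ≤ k) : IsCZ (czS c k) := by
  have hk' : (1 : ℝ) ≤ k := by exact_mod_cast hk
  refine ⟨(c, 0, 1), 2 * Real.exp (4 * k), k + 1, by norm_num, by positivity, by positivity,
    ?_, ?_, ?_⟩
  · simp [czS]
  · intro h; linarith
  · intro _
    constructor
    · have : Real.exp (2 * ((k : ℝ) + 1)) ≤ Real.exp (4 * k) := Real.exp_le_exp.2 (by linarith)
      have := Real.exp_pos (4 * (k : ℝ))
      simp only [one_mul]; linarith
    · have h1 : Real.exp (4 * (k : ℝ) + 1) ≤ Real.exp (8 * ((k : ℝ) + 1)) :=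
        Real.exp_le_exp.2 (by linarith)
      rw [Real.exp_add] at h1
      have h2 : (2 : ℝ) < Real.exp 1 := by have := Real.exp_one_gt_d9; linarith
      have := Real.exp_pos (4 * (k : ℝ))
      simp only [one_mul]; nlinarith

lemma czS_subset (c d : ℝ) (k : ℕ) (h : |c - d| ≤ Real.exp (4 * k)) :
    czS c k ⊆ czS d (k + 1) := by
  have h2 : 2 * Real.exp (4 * k) ≤ Real.exp (4 * ((k + 1 : ℕ) : ℝ)) := by
    have e : (4 * ((k + 1 : ℕ) : ℝ)) = 4 * k + 4 := by push_cast; ring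
    rw [e, Real.exp_add]
    have := Real.add_one_le_exp (4 : ℝ)
    have := Real.exp_pos (4 * (k : ℝ))
    nlinarith
  have hp := Real.exp_pos (4 * (k : ℝ))
  obtain ⟨h3, h4⟩ := abs_le.1 h
  unfold czS
  refine Set.prod_mono (Set.Icc_subset_Icc (by linarith) (by linarith))
    (Set.prod_mono (Set.Icc_subset_Icc (by linarith) (by linarith))
      (Set.Icc_subset_Icc (Real.exp_le_exp.2 ?_) (Real.exp_le_exp.2 ?_))) <;>
  · push_cast; linarith

def czphi (c : ℝ) (k : ℕ) : G → ℝ := (czS c k).indicator (fun _ => (czm k)⁻¹)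

lemma czphi_int (c : ℝ) (k : ℕ) : Integrable (czphi c k) ρG := by
  refine (integrable_indicator_iff (czS_meas c k)).2 ?_
  refine integrableOn_const ?_
  rw [rho_czS]; exact ENNReal.ofReal_ne_top

lemma czphi_integral (c : ℝ) (k : ℕ) : ∫ x, czphi c k x ∂ρG = 1 := by
  unfold czphi
  rw [integral_indicator (czS_meas c k), setIntegral_const, Measure.real, rho_czS,
    ENNReal.toReal_ofReal (czm_pos k).le, smul_eq_mul, mul_inv_cancel₀ (czm_pos k).ne']

lemma czphi_bd (c : ℝ) (k : ℕ) (x : G) : 0 ≤ czphi c k x ∧ czphi c k x ≤ (czm k)⁻¹ := by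
  have := inv_pos.2 (czm_pos k)
  unfold czphi
  by_cases h : x ∈ czS c k
  · simp [h, this.le]
  · simp [h, this.le]

lemma atom_of (c d e : ℝ) (i j k : ℕ) (M : ℝ) (hM : 0 < M) (hk : 1 ≤ k)
    (hi : czS c i ⊆ czS e k) (hj : czS d j ⊆ czS e k)
    (mi : czm k ≤ M * czm i) (mj : czm k ≤ M * czm j) :
    IsAtomG (fun x => M⁻¹ * (czphi c i x - czphi d j x)) := by
  refine ⟨((czphi_int c i).sub (czphi_int d j)).const_mul _, czS e k, czS_isCZ e k hk, ?_, ?_, ?_⟩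
  · intro x hx
    have h1 : x ∉ czS c i := fun h => hx (hi h)
    have h2 : x ∉ czS d j := fun h => hx (hj h)
    simp [czphi, h1, h2]
  · rw [rho_czS, ← ENNReal.ofReal_inv_of_pos (czm_pos k), eLpNorm_exponent_top]
    refine eLpNormEssSup_le_of_ae_bound (Eventually.of_forall fun x => ?_)
    have key : ∀ i, czm k ≤ M * czm i → (czm i)⁻¹ ≤ M * (czm k)⁻¹ := by
      intro i h
      rw [inv_le_iff_one_le_mul₀ (czm_pos i), mul_right_comm, ← div_eq_mul_inv,
        one_le_div (czm_pos k)]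
      exact h
    have k1 := key i mi
    have k2 := key j mj
    obtain ⟨a1, a2⟩ := czphi_bd c i x
    obtain ⟨b1, b2⟩ := czphi_bd d j x
    rw [Real.norm_eq_abs, abs_mul, abs_of_pos (inv_pos.2 hM), inv_mul_le_iff₀ hM, abs_le]
    constructor <;> linarith
  · rw [integral_const_mul, integral_sub (czphi_int c i) (czphi_int d j),
      czphi_integral, czphi_integral]
    simp

lemma atom_zero : IsAtomG (fun _ => 0) := by
  refine ⟨integrable_zero _ _ _, czS 0 1, czS_isCZ 0 1 le_rfl, fun _ _ => rfl, ?_, by simp⟩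
  have : eLpNorm (fun _ : G => (0 : ℝ)) ⊤ ρG = 0 := eLpNorm_zero
  rw [this]; exact zero_le

def FinDec (f : G → ℝ) (s : ℝ) : Prop :=
  ∃ (n : ℕ) (lam : ℕ → ℝ) (A : ℕ → G → ℝ), (∀ j, IsAtomG (A j)) ∧
    (∀ x, f x = ∑ j ∈ Finset.range n, lam j * A j x) ∧ ∑ j ∈ Finset.range n, |lam j| ≤ s

lemma finDec_zero : FinDec (fun _ => 0) 0 :=
  ⟨0, fun _ => 0, fun _ _ => 0, fun _ => atom_zero, by simp, by simp⟩

lemma FinDec.add_atom {f g B : G → ℝ} {s t : ℝ} (h : FinDec f s) (hB : IsAtomG B) (ht : 0 ≤ t)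
    (hg : ∀ x, g x = f x + t * B x) : FinDec g (s + t) := by
  obtain ⟨n, lam, A, hA, hf, hs⟩ := h
  refine ⟨n + 1, fun j => if j < n then lam j else t, fun j => if j < n then A j else B,
    ?_, ?_, ?_⟩
  · intro j
    by_cases hj : j < n
    · simpa [hj] using hA j
    · simpa [hj] using hB
  · intro x
    rw [Finset.sum_range_succ, hg, hf]
    congr 1
    · refine Finset.sum_congr rfl fun j hj => ?_
      simp [Finset.mem_range.1 hj]
    · simp
  · rw [Finset.sum_range_succ]
    have : ∑ j ∈ Finset.range n, |if j < n then lam j else t| = ∑ j ∈ Finset.range n, |lam j| := by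
      refine Finset.sum_congr rfl fun j hj => ?_
      simp [Finset.mem_range.1 hj]
    rw [this]
    simp [abs_of_nonneg ht, hs]

lemma FinDec.out {f : G → ℝ} {s : ℝ} (h : FinDec f s) :
    (∃ lam A, IsH1Decomp f lam A) ∧ H1norm f ≤ s := by
  obtain ⟨n, lam, A, hA, hf, hs⟩ := h
  set l : ℕ → ℝ := fun j => if j < n then lam j else 0 with hl
  have hz : ∀ j ∉ Finset.range n, |l j| = 0 := by
    intro j hj
    have : ¬ j < n := by simpa using hj
    simp [hl, this]
  have hd : IsH1Decomp f l A := by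
    refine ⟨hA, summable_of_ne_finset_zero hz, ?_⟩
    apply tendsto_const_nhds.congr'
    filter_upwards [eventually_ge_atTop n] with N hN
    have : (fun x => f x - ∑ j ∈ Finset.range N, l j * A j x) = fun _ => 0 := by
      funext x
      rw [hf, ← Finset.sum_subset (Finset.range_mono hN)
        (f := fun j => l j * A j x), sub_eq_zero]
      · refine Finset.sum_congr rfl fun j hj => ?_
        simp [hl, Finset.mem_range.1 hj]
      · intro j _ hj
        have : l j = 0 := abs_eq_zero.1 (hz j hj)
        simp [this]
    rw [this]
    exact eLpNorm_zero.symm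
  refine ⟨⟨l, A, hd⟩, ?_⟩
  refine le_trans (csInf_le ⟨0, ?_⟩ ⟨l, A, hd, rfl⟩) ?_
  · rintro _ ⟨l', A', -, rfl⟩
    exact tsum_nonneg fun _ => abs_nonneg _
  · rw [tsum_eq_sum hz]
    refine le_trans (le_of_eq ?_) hs
    refine Finset.sum_congr rfl fun j hj => ?_
    simp [hl, Finset.mem_range.1 hj]

lemma chain (L : ℝ) (k : ℕ) :
    FinDec (fun x => 8 * ((czphi L 0 x - czphi L k x) + (czphi 0 k x - czphi 0 0 x)))
      (k * (2 * (8 * (2 * Real.exp 8)))) := by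
  have hM : 0 < 2 * Real.exp 8 := by positivity
  induction k with
  | zero =>
    have := finDec_zero
    simpa using this
  | succ k ih =>
    have sub : ∀ c, czS c k ⊆ czS c (k + 1) := fun c =>
      czS_subset c c k (by simpa using (Real.exp_pos _).le)
    have self : czm (k + 1) ≤ 2 * Real.exp 8 * czm (k + 1) := by
      have := Real.add_one_le_exp (8 : ℝ)
      nlinarith [czm_pos (k + 1)]
    have a1 := atom_of L L L k (k + 1) (k + 1) _ hM (by omega) (sub L) subset_rfl
      (czm_succ k) self
    have a2 := atom_of 0 0 0 (k + 1) k (k + 1) _ hM (by omega) subset_rfl (sub 0)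
      self (czm_succ k)
    have ht : 0 ≤ 8 * (2 * Real.exp 8) := by positivity
    have h1 := ih.add_atom a1 ht (fun x => rfl)
    have h2 := h1.add_atom a2 ht (g := fun x => 8 * ((czphi L 0 x - czphi L (k + 1) x)
      + (czphi 0 (k + 1) x - czphi 0 0 x))) (fun x => by field_simp; ring)
    convert h2 using 1
    push_cast; ring

lemma fL_eq (L : ℝ) (x : G) : fL L x = 8 * (czphi L 0 x - czphi 0 0 x) := by
  have h1 : RLset L = czS L 0 := by simp [RLset, czS]
  have h2 : R0set = czS 0 0 := by simp [R0set, czS]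
  have h3 : czm 0 = 8 := by simp [czm]; norm_num
  unfold fL czphi
  rw [h1, h2, h3]
  by_cases a : x ∈ czS L 0 <;> by_cases b : x ∈ czS 0 0 <;> simp [a, b]

lemma fL_finDec (L : ℝ) (hL : 2 < L) (k : ℕ) (hk : Real.log L ≤ k) :
    FinDec (fL L) (k * (2 * (8 * (2 * Real.exp 8))) + 8 * (2 * Real.exp 8)) := by
  have hM : 0 < 2 * Real.exp 8 := by positivity
  have hle : L ≤ Real.exp (4 * k) := by
    rw [← Real.exp_log (show 0 < L by linarith)]
    apply Real.exp_le_exp.2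
    have : (0 : ℝ) ≤ k := by positivity
    linarith
  have a1 := atom_of L 0 0 k k (k + 1) _ hM (by omega)
    (czS_subset L 0 k (by rw [sub_zero, abs_of_pos (by linarith)]; exact hle))
    (czS_subset 0 0 k (by simpa using (Real.exp_pos _).le)) (czm_succ k) (czm_succ k)
  refine (chain L k).add_atom a1 (by positivity) fun x => ?_
  rw [fL_eq]
  field_simp; ring

theorem fL_H1norm_upper :
    ∃ C > (0 : ℝ), ∀ L : ℝ, 2 < L → MemH1 (fL L) ∧ H1norm (fL L) ≤ C * Real.log L := by
  refine ⟨7 * (8 * (2 * Real.exp 8)), by positivity, fun L hL => ?_⟩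
  have hlog : 0.69 ≤ Real.log L := by
    have h1 := Real.log_two_gt_d9
    have h2 := Real.log_le_log (by norm_num) hL.le
    linarith
  obtain ⟨h1, h2⟩ := (fL_finDec L hL ⌈Real.log L⌉₊ (Nat.le_ceil _)).out
  refine ⟨⟨?_, h1⟩, h2.trans ?_⟩
  · have : fL L = fun x => 8 * (czphi L 0 x - czphi 0 0 x) := funext (fL_eq L)
    rw [this]
    exact ((czphi_int L 0).sub (czphi_int 0 0)).const_mul _
  · have h3 : (⌈Real.log L⌉₊ : ℝ) < Real.log L + 1 := Nat.ceil_lt_add_one (by linarith)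
    have h4 : 0 < 8 * (2 * Real.exp 8) := by positivity
    nlinarith
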